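/- For every n ≥ 1, the image f_n((ℂ²)^{⊗n}) of the Jones–Wenzl idempotent f_n is an A_t-submodule of 1̲^{⊗n} of dimension n+1, isomorphic as an A_t-module to the irreducible module n̲; that is, f_n is the projection of 1̲^{⊗n} onto its highest weight irreducible summand. -/

import Mathlib

open scoped TensorProduct
open Complex

noncomputable section

/-- The four generators `X`, `Y`, `K`, `K⁻¹` of the algebra `Aₜ`. -/
inductive QGen : Type
  | X | Y | K | K'
  deriving DecidableEq

/-- The image of a generator in the free algebra on the generators. -/
def qg (x : QGen) : FreeAlgebra ℂ QGen := FreeAlgebra.ι ℂ x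

/-- The defining relations of `Aₜ`:
`KX = t²XK`, `KY = t⁻²YK`, `XY − YX = (K² − K⁻²)/(t² − t⁻²)`, `KK⁻¹ = K⁻¹K = 1`. -/
inductive QRel (t : ℂ) : FreeAlgebra ℂ QGen → FreeAlgebra ℂ QGen → Prop
  | KX : QRel t (qg .K * qg .X) ((t ^ 2 : ℂ) • (qg .X * qg .K))
  | KY : QRel t (qg .K * qg .Y) ((t⁻¹ ^ 2 : ℂ) • (qg .Y * qg .K))
  | XY : QRel t (qg .X * qg .Y - qg .Y * qg .X)
      (((t ^ 2 - t⁻¹ ^ 2)⁻¹ : ℂ) • (qg .K * qg .K - qg .K' * qg .K'))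
  | KK' : QRel t (qg .K * qg .K') 1
  | K'K : QRel t (qg .K' * qg .K) 1

/-- The algebra `Aₜ`: the quotient of the free algebra by the defining relations. -/
abbrev At (t : ℂ) : Type := RingQuot (QRel t)

/-- The generator `X` in `Aₜ`. -/
def aX (t : ℂ) : At t := RingQuot.mkAlgHom ℂ (QRel t) (qg .X)
/-- The generator `Y` in `Aₜ`. -/
def aY (t : ℂ) : At t := RingQuot.mkAlgHom ℂ (QRel t) (qg .Y)
/-- The generator `K` in `Aₜ`. -/
def aK (t : ℂ) : At t := RingQuot.mkAlgHom ℂ (QRel t) (qg .K)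
/-- The generator `K⁻¹` in `Aₜ`. -/
def aK' (t : ℂ) : At t := RingQuot.mkAlgHom ℂ (QRel t) (qg .K')

/-- The quantum integer `[n] = (t^{2n} − t^{−2n})/(t² − t⁻²)`. -/
def qint (t : ℂ) (n : ℤ) : ℂ := (t ^ (2 * n) - t ^ (-(2 * n))) / (t ^ 2 - t⁻¹ ^ 2)

/-- The matrix of `ρ_m(K)`: `K e_j = t^{m−2j} e_j`. -/
def Kmat (t : ℂ) (m : ℕ) : Matrix (Fin (m + 1)) (Fin (m + 1)) ℂ :=
  Matrix.diagonal fun j => t ^ ((m : ℤ) - 2 * (j : ℤ))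

/-- The matrix of `ρ_m(K⁻¹)`: `K⁻¹ e_j = t^{−(m−2j)} e_j`. -/
def K'mat (t : ℂ) (m : ℕ) : Matrix (Fin (m + 1)) (Fin (m + 1)) ℂ :=
  Matrix.diagonal fun j => t ^ (-((m : ℤ) - 2 * (j : ℤ)))

/-- The matrix of `ρ_m(X)`: `X e_j = [j] e_{j−1}` (with `e_{−1} = 0`). -/
def Xmat (t : ℂ) (m : ℕ) : Matrix (Fin (m + 1)) (Fin (m + 1)) ℂ :=
  Matrix.of fun i j => if (j : ℕ) = (i : ℕ) + 1 then qint t (j : ℤ) else 0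

/-- The matrix of `ρ_m(Y)`: `Y e_j = [m−j] e_{j+1}` (with `e_{m+1} = 0`). -/
def Ymat (t : ℂ) (m : ℕ) : Matrix (Fin (m + 1)) (Fin (m + 1)) ℂ :=
  Matrix.of fun i j => if (i : ℕ) = (j : ℕ) + 1 then qint t ((m : ℤ) - (j : ℤ)) else 0

/-- `ρ` is the representation `ρ_m : Aₜ → M_{m+1}(ℂ)` determined by the matrices above. -/
def IsRho (t : ℂ) (m : ℕ) (ρ : At t →ₐ[ℂ] Matrix (Fin (m + 1)) (Fin (m + 1)) ℂ) : Prop :=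
  ρ (aX t) = Xmat t m ∧ ρ (aY t) = Ymat t m ∧ ρ (aK t) = Kmat t m ∧ ρ (aK' t) = K'mat t m

/-- The `n`-fold tensor power `1̲^{⊗n} = (ℂ²)^{⊗n}`, realized concretely as the space of
ℂ-valued functions on the set of multi-indices `(Fin 2)ⁿ` (the basis vector
`e_{s 0} ⊗ ⋯ ⊗ e_{s (n−1)}` corresponds to the delta function at `s`). -/
abbrev Vn (n : ℕ) : Type := (Fin n → Fin 2) → ℂ

/-- Pointwise multiplication by a fixed function, as a linear endomorphism. -/
def ptwiseMul {α : Type} (c : α → ℂ) : (α → ℂ) →ₗ[ℂ] (α → ℂ) where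
  toFun f := fun u => c u * f u
  map_add' f g := by funext u; simp [mul_add]
  map_smul' r f := by funext u; simp [smul_eq_mul]; ring

/-- The coefficients of `μ`: `μ(e_a ⊗ e_b) = muC a b`, i.e. `μ(e_{1/2}⊗e_{−1/2}) = it`,
`μ(e_{−1/2}⊗e_{1/2}) = −it⁻¹`, `0` otherwise (recall `e_{1/2} = e₀`, `e_{−1/2} = e₁`). -/
def muC (t : ℂ) : Fin 2 → Fin 2 → ℂ :=
  ![![0, Complex.I * t], ![-(Complex.I * t⁻¹), 0]]

/-- The coefficients of `η`: `η(1) = ∑_{a,b} etaC a b • e_a ⊗ e_b`, i.e.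
`η(1) = it·e_{1/2}⊗e_{−1/2} − it⁻¹·e_{−1/2}⊗e_{1/2}`. -/
def etaC (t : ℂ) : Fin 2 → Fin 2 → ℂ :=
  ![![0, Complex.I * t], ![-(Complex.I * t⁻¹), 0]]

/-- The Temperley–Lieb generator `E = id^{⊗i} ⊗ (η∘μ) ⊗ id^{⊗(n−i−2)}` acting on
`1̲^{⊗n}`, where `η∘μ` acts on the tensor factors in positions `i` and `i+1`
(`0`-indexed; this is `E_{i+1}` in the `1`-indexed labelling). On basis vectors,
`E (e_{s}) = μ(e_{s i} ⊗ e_{s (i+1)}) · ∑_{a b} etaC a b • e_{s[i:=a][i+1:=b]}`,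
which in function coordinates is the formula below. -/
def TLE (t : ℂ) (n i : ℕ) (h : i + 1 < n) : Module.End ℂ (Vn n) :=
  (ptwiseMul fun u => etaC t (u ⟨i, Nat.lt_of_succ_lt h⟩) (u ⟨i + 1, h⟩)) ∘ₗ
    ∑ a : Fin 2, ∑ b : Fin 2, muC t a b •
      LinearMap.funLeft ℂ ℂ (fun u =>
        Function.update (Function.update u (⟨i, Nat.lt_of_succ_lt h⟩ : Fin n) a)
          (⟨i + 1, h⟩ : Fin n) b)
/-- Diagonal entries of `ρ₁(K) = diag(t, t⁻¹)` on the basis `e₀ = e_{1/2}`, `e₁ = e_{−1/2}`. -/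
def kD (t : ℂ) : Fin 2 → ℂ := ![t, t⁻¹]
/-- Diagonal entries of `ρ₁(K⁻¹) = diag(t⁻¹, t)`. -/
def kD' (t : ℂ) : Fin 2 → ℂ := ![t⁻¹, t]

/-- Action of `K` on `1̲^{⊗n}` (via the iterated coproduct `Δ^{(n−1)}K = K^{⊗n}`). -/
def piK (t : ℂ) (n : ℕ) : Module.End ℂ (Vn n) :=
  ptwiseMul fun u => ∏ k : Fin n, kD t (u k)

/-- Action of `K⁻¹` on `1̲^{⊗n}`. -/
def piK' (t : ℂ) (n : ℕ) : Module.End ℂ (Vn n) :=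
  ptwiseMul fun u => ∏ k : Fin n, kD' t (u k)

/-- Action of `X` on `1̲^{⊗n}` (via `Δ^{(n−1)}X = ∑_i (K⁻¹)^{⊗i} ⊗ X ⊗ K^{⊗(n−1−i)}`;
recall `ρ₁(X)e₁ = e₀`, `ρ₁(X)e₀ = 0`). -/
def piX (t : ℂ) (n : ℕ) : Module.End ℂ (Vn n) :=
  ∑ i : Fin n,
    (ptwiseMul fun u => (if u i = 0 then 1 else 0) *
        (∏ k ∈ Finset.univ.filter (fun k => k < i), kD' t (u k)) *
        (∏ k ∈ Finset.univ.filter (fun k => i < k), kD t (u k))) ∘ₗ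
      LinearMap.funLeft ℂ ℂ (fun u => Function.update u i 1)

/-- Action of `Y` on `1̲^{⊗n}` (via `Δ^{(n−1)}Y = ∑_i (K⁻¹)^{⊗i} ⊗ Y ⊗ K^{⊗(n−1−i)}`;
recall `ρ₁(Y)e₀ = e₁`, `ρ₁(Y)e₁ = 0`). -/
def piY (t : ℂ) (n : ℕ) : Module.End ℂ (Vn n) :=
  ∑ i : Fin n,
    (ptwiseMul fun u => (if u i = 1 then 1 else 0) *
        (∏ k ∈ Finset.univ.filter (fun k => k < i), kD' t (u k)) *
        (∏ k ∈ Finset.univ.filter (fun k => i < k), kD t (u k))) ∘ₗ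
      LinearMap.funLeft ℂ ℂ (fun u => Function.update u i 0)

/-- `π` is the representation of `Aₜ` on the `n`-fold tensor power `1̲^{⊗n}` obtained
from `ρ₁` via the iterated comultiplication. -/
def IsPi (t : ℂ) (n : ℕ) (π : At t →ₐ[ℂ] Module.End ℂ (Vn n)) : Prop :=
  π (aX t) = piX t n ∧ π (aY t) = piY t n ∧ π (aK t) = piK t n ∧ π (aK' t) = piK' t n

/-- number of ones -/
def oN {n : ℕ} (u : Fin n → Fin 2) : ℕ := ∑ k, (u k : ℕ)

/-- the weight `t^{2 inv(u)}` -/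
def Tw (t : ℂ) : (n : ℕ) → (Fin n → Fin 2) → ℂ
  | 0, _ => 1
  | n + 1, u => (if u 0 = 1 then t ^ (2 * ((n : ℤ) - (oN (Fin.tail u) : ℤ))) else 1) *
      Tw t n (Fin.tail u)

/-- geometric sum -/
def Gg (t : ℂ) (m : ℤ) : ℂ := (t ^ (4 * m) - 1) / (t ^ 4 - 1)

lemma oN_cons {n : ℕ} (a : Fin 2) (u : Fin n → Fin 2) :
    oN (Fin.cons a u : Fin (n + 1) → Fin 2) = a + oN u := by
  simp [oN, Fin.sum_univ_succ]

lemma Tw_cons (t : ℂ) {n : ℕ} (a : Fin 2) (u : Fin n → Fin 2) :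
    Tw t (n + 1) (Fin.cons a u) =
      (if a = 1 then t ^ (2 * ((n : ℤ) - (oN u : ℤ))) else 1) * Tw t n u := by
  simp [Tw]

lemma Tw_ne {t : ℂ} (ht : t ≠ 0) : ∀ (n : ℕ) (u : Fin n → Fin 2), Tw t n u ≠ 0
  | 0, _ => one_ne_zero
  | n + 1, u => by
    rw [Tw]
    refine mul_ne_zero ?_ (Tw_ne ht n _)
    split_ifs
    · exact zpow_ne_zero _ ht
    · exact one_ne_zero

lemma oN_update {n : ℕ} (u : Fin n → Fin 2) (i : Fin n) (a : Fin 2) :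
    oN (Function.update u i a) + u i = oN u + a := by
  unfold oN
  rw [← Finset.add_sum_erase _ _ (Finset.mem_univ i),
    ← Finset.add_sum_erase (a := i) _ (fun k => (u k : ℕ)) (Finset.mem_univ i)]
  have : ∑ x ∈ Finset.univ.erase i, ((Function.update u i a x : Fin 2) : ℕ) =
      ∑ x ∈ Finset.univ.erase i, (u x : ℕ) := by
    refine Finset.sum_congr rfl fun x hx => ?_
    rw [Function.update_of_ne (Finset.ne_of_mem_erase hx)]
  rw [this]; simp; ring

lemma oN_le {n : ℕ} (u : Fin n → Fin 2) : oN u ≤ n := by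
  unfold oN
  calc ∑ k, (u k : ℕ) ≤ ∑ _k : Fin n, 1 := Finset.sum_le_sum fun k _ => by omega
    _ = n := by simp

lemma prod_kD {t : ℂ} (ht : t ≠ 0) : ∀ (n : ℕ) (u : Fin n → Fin 2),
    ∏ k, kD t (u k) = t ^ ((n : ℤ) - 2 * (oN u : ℤ))
  | 0, u => by simp [oN]
  | n + 1, u => by
    rw [← Fin.cons_self_tail u]
    generalize u 0 = a
    generalize Fin.tail u = v
    rw [Fin.prod_univ_succ, oN_cons]
    simp only [Fin.cons_zero, Fin.cons_succ, prod_kD ht n v]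
    fin_cases a
    · simp [kD]
      rw [← zpow_one_add₀ ht]; congr 1; ring
    · simp [kD]
      rw [← zpow_neg_one, ← zpow_add₀ ht]; congr 1; ring

lemma prod_kD' {t : ℂ} (ht : t ≠ 0) : ∀ (n : ℕ) (u : Fin n → Fin 2),
    ∏ k, kD' t (u k) = t ^ (-((n : ℤ) - 2 * (oN u : ℤ))) := by
  intro n u
  rw [zpow_neg, ← prod_kD ht, ← Finset.prod_inv_distrib]
  refine Finset.prod_congr rfl fun k _ => ?_
  generalize u k = a
  fin_cases a <;> simp [kD, kD']

lemma Gg_succ {t : ℂ} (ht : t ≠ 0) (h4 : t ^ 4 - 1 ≠ 0) (m : ℤ) :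
    Gg t (m + 1) = t ^ (4 * m) + Gg t m := by
  unfold Gg
  field_simp
  rw [mul_add, zpow_add₀ ht]
  norm_cast
  ring

lemma Gg_succ' {t : ℂ} (ht : t ≠ 0) (h4 : t ^ 4 - 1 ≠ 0) (m : ℤ) :
    Gg t (m + 1) = 1 + t ^ 4 * Gg t m := by
  unfold Gg
  field_simp
  rw [mul_add, zpow_add₀ ht]
  norm_cast
  ring

lemma qint_eq {t : ℂ} (ht : t ≠ 0) (h4 : t ^ 4 - 1 ≠ 0) (m : ℤ) :
    qint t m = t ^ (2 - 2 * m) * Gg t m := by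
  unfold qint Gg
  have h2 : t ^ 2 - t⁻¹ ^ 2 = (t ^ 4 - 1) / t ^ 2 := by field_simp
  rw [h2, zpow_sub₀ ht, zpow_neg, show 4 * m = 2 * m + 2 * m by ring, zpow_add₀ ht]
  have := zpow_ne_zero (2 * m) ht
  field_simp

/-- coefficient in the iterated coproduct -/
def cf (t : ℂ) {n : ℕ} (u : Fin n → Fin 2) (i : Fin n) : ℂ :=
  (∏ k ∈ Finset.univ.filter (fun k => k < i), kD' t (u k)) *
        (∏ k ∈ Finset.univ.filter (fun k => i < k), kD t (u k))

lemma cf_zero (t : ℂ) {n : ℕ} (a : Fin 2) (u : Fin n → Fin 2) :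
    cf t (Fin.cons a u : Fin (n + 1) → Fin 2) 0 = ∏ k, kD t (u k) := by
  simp [cf, Finset.prod_filter, Fin.prod_univ_succ]

lemma cf_succ (t : ℂ) {n : ℕ} (a : Fin 2) (u : Fin n → Fin 2) (i : Fin n) :
    cf t (Fin.cons a u : Fin (n + 1) → Fin 2) i.succ = kD' t a * cf t u i := by
  simp [cf, Finset.prod_filter, Fin.prod_univ_succ, mul_assoc]

lemma SY {t : ℂ} (ht : t ≠ 0) (h4 : t ^ 4 - 1 ≠ 0) : ∀ (n : ℕ) (u : Fin n → Fin 2),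
    ∑ i, (if u i = 1 then cf t u i * Tw t n (Function.update u i 0) else 0) =
      Tw t n u * t ^ (1 - (n : ℤ)) * Gg t (oN u)
  | 0, u => by simp [oN, Gg]
  | n + 1, u => by
    rw [← Fin.cons_self_tail u]
    generalize u 0 = a
    generalize Fin.tail u = v
    rw [Fin.sum_univ_succ, oN_cons]
    simp only [Fin.cons_zero, Fin.cons_succ, Fin.update_cons_zero, ← Fin.cons_update, cf_zero,
      cf_succ, prod_kD ht, Tw_cons]
    have ih := SY ht h4 n v
    have e : ∀ (a : Fin 2) (i : Fin n), (if v i = 1 then kD' t a * cf t v i *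
        ((if a = 1 then t ^ (2 * ((n : ℤ) - (oN (Function.update v i 0) : ℤ))) else 1) *
          Tw t n (Function.update v i 0)) else 0) =
        (kD' t a * (if a = 1 then t ^ (2 * ((n : ℤ) - (oN v : ℤ)) + 2) else 1)) *
        (if v i = 1 then cf t v i * Tw t n (Function.update v i 0) else 0) := by
      intro a i
      split_ifs with h1 h2
      · have := oN_update v i 0
        rw [h1] at this
        simp at this
        rw [← this]
        push_cast
        rw [show 2 * ((n : ℤ) - ((oN (Function.update v i 0) : ℤ) + 1)) + 2 =
          2 * ((n : ℤ) - (oN (Function.update v i 0) : ℤ)) by ring]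
        ring
      · ring
      all_goals simp
    rw [Finset.sum_congr rfl (fun i _ => e a i), ← Finset.mul_sum, ih]
    fin_cases a
    · simp [kD']
      rw [zpow_sub₀ ht, zpow_one, zpow_natCast]
      field_simp
    · simp [kD']
      rw [add_comm (1 : ℤ), Gg_succ' ht h4]
      simp only [two_mul, zpow_sub₀ ht, zpow_add₀ ht, zpow_neg, zpow_one, zpow_two, zpow_natCast]
      have := pow_ne_zero n ht
      have := pow_ne_zero (oN v) ht
      field_simp

lemma SX {t : ℂ} (ht : t ≠ 0) (h4 : t ^ 4 - 1 ≠ 0) : ∀ (n : ℕ) (u : Fin n → Fin 2),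
    ∑ i, (if u i = 0 then cf t u i * Tw t n (Function.update u i 1) else 0) =
      Tw t n u * t ^ (1 - (n : ℤ)) * Gg t (n - oN u)
  | 0, u => by simp [oN, Gg]
  | n + 1, u => by
    rw [← Fin.cons_self_tail u]
    generalize u 0 = a
    generalize Fin.tail u = v
    rw [Fin.sum_univ_succ, oN_cons]
    simp only [Fin.cons_zero, Fin.cons_succ, Fin.update_cons_zero, ← Fin.cons_update, cf_zero,
      cf_succ, prod_kD ht, Tw_cons]
    have ih := SX ht h4 n v
    have e : ∀ (a : Fin 2) (i : Fin n), (if v i = 0 then kD' t a * cf t v i *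
        ((if a = 1 then t ^ (2 * ((n : ℤ) - (oN (Function.update v i 1) : ℤ))) else 1) *
          Tw t n (Function.update v i 1)) else 0) =
        (kD' t a * (if a = 1 then t ^ (2 * ((n : ℤ) - (oN v : ℤ)) - 2) else 1)) *
        (if v i = 0 then cf t v i * Tw t n (Function.update v i 1) else 0) := by
      intro a i
      split_ifs with h1 h2
      · have := oN_update v i 1
        rw [h1] at this
        simp at this
        rw [this]
        push_cast
        rw [show 2 * ((n : ℤ) - ((oN v : ℤ) + 1)) =
          2 * ((n : ℤ) - (oN v : ℤ)) - 2 by ring]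
        ring
      · ring
      all_goals simp
    rw [Finset.sum_congr rfl (fun i _ => e a i), ← Finset.mul_sum, ih]
    fin_cases a
    · simp [kD']
      rw [show (n : ℤ) + 1 - oN v = (n - oN v) + 1 by ring, Gg_succ ht h4,
        show (4 : ℤ) * (n - oN v) = (n - 2 * oN v) + (2 * (n - oN v)) + n by ring]
      simp only [two_mul, zpow_sub₀ ht, zpow_add₀ ht, zpow_neg, zpow_one, zpow_two, zpow_natCast]
      have := pow_ne_zero n ht
      have := pow_ne_zero (oN v) ht
      field_simp
    · simp [kD']
      rw [show (n : ℤ) + 1 - (1 + oN v) = (n - oN v) by ring]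
      simp only [two_mul, zpow_sub₀ ht, zpow_add₀ ht, zpow_neg, zpow_one, zpow_two, zpow_natCast]
      have := pow_ne_zero n ht
      have := pow_ne_zero (oN v) ht
      field_simp

lemma piX_apply (t : ℂ) (n : ℕ) (w : Vn n) (u : Fin n → Fin 2) :
    piX t n w u = ∑ i, (if u i = 0 then cf t u i * w (Function.update u i 1) else 0) := by
  simp only [piX, LinearMap.sum_apply, Finset.sum_apply]
  refine Finset.sum_congr rfl fun i _ => ?_
  simp [ptwiseMul, LinearMap.funLeft, cf]

lemma piY_apply (t : ℂ) (n : ℕ) (w : Vn n) (u : Fin n → Fin 2) :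
    piY t n w u = ∑ i, (if u i = 1 then cf t u i * w (Function.update u i 0) else 0) := by
  simp only [piY, LinearMap.sum_apply, Finset.sum_apply]
  refine Finset.sum_congr rfl fun i _ => ?_
  simp [ptwiseMul, LinearMap.funLeft, cf]

/-- updating two places -/
def upd {n : ℕ} (u : Fin (n + 1) → Fin 2) (i : Fin n) (a b : Fin 2) : Fin (n + 1) → Fin 2 :=
  Function.update (Function.update u i.castSucc a) i.succ b

lemma upd_succ {n : ℕ} (c : Fin 2) (u : Fin (n + 1) → Fin 2) (i : Fin n) (a b : Fin 2) :
    upd (Fin.cons c u : Fin (n + 1 + 1) → Fin 2) i.succ a b = Fin.cons c (upd u i a b) := by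
  simp [upd, Fin.cons_update]

lemma upd_zero {n : ℕ} (c d : Fin 2) (u : Fin n → Fin 2) (a b : Fin 2) :
    upd (Fin.cons c (Fin.cons d u : Fin (n + 1) → Fin 2) : Fin (n + 1 + 1) → Fin 2) 0 a b =
      Fin.cons a (Fin.cons b u : Fin (n + 1) → Fin 2) := by
  funext k
  refine Fin.cases ?_ (fun k => ?_) k
  · simp [upd]
  · refine Fin.cases ?_ (fun k => ?_) k
    · simp [upd]
    · simp [upd, Function.update_apply, Fin.ext_iff]

lemma oN_upd : ∀ (n : ℕ) (u : Fin (n + 1) → Fin 2) (i : Fin n),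
    oN (upd u i 1 0) = oN (upd u i 0 1)
  | 0, _, i => i.elim0
  | n + 1, u, i => by
    rw [← Fin.cons_self_tail u]
    generalize u 0 = a
    generalize Fin.tail u = v
    refine Fin.cases ?_ (fun i => ?_) i
    · rw [← Fin.cons_self_tail v]
      simp only [upd_zero, oN_cons]
      simp
    · rw [upd_succ, upd_succ, oN_cons, oN_cons, oN_upd n v i]

lemma Tw_upd {t : ℂ} (ht : t ≠ 0) : ∀ (n : ℕ) (u : Fin (n + 1) → Fin 2) (i : Fin n),
    Tw t _ (upd u i 1 0) = t ^ 2 * Tw t _ (upd u i 0 1)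
  | 0, _, i => i.elim0
  | n + 1, u, i => by
    rw [← Fin.cons_self_tail u]
    generalize u 0 = a
    generalize Fin.tail u = v
    refine Fin.cases ?_ (fun i => ?_) i
    · rw [← Fin.cons_self_tail v]
      simp only [upd_zero, Tw_cons, oN_cons]
      simp
      rw [show 2 * ((n : ℤ) + 1 - oN (Fin.tail v)) = 2 + 2 * ((n : ℤ) - oN (Fin.tail v)) by ring,
        zpow_add₀ ht]
      norm_cast
      ring
    · rw [upd_succ, upd_succ, Tw_cons, Tw_cons, Tw_upd ht n v i, oN_upd]
      ring

lemma TLE_apply (t : ℂ) (n : ℕ) (i : Fin n) (w : Vn (n + 1)) (u : Fin (n + 1) → Fin 2) :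
    TLE t (n + 1) i (by omega) w u = etaC t (u i.castSucc) (u i.succ) *
      (I * t * w (upd u i 0 1) - I * t⁻¹ * w (upd u i 1 0)) := by
  have : TLE t (n + 1) i (by omega) w u = etaC t (u i.castSucc) (u i.succ) *
      ∑ a : Fin 2, ∑ b : Fin 2, muC t a b * w (upd u i a b) := by
    simp [TLE, ptwiseMul, LinearMap.funLeft, upd]
    rfl
  rw [this]
  simp [muC]
  ring_nf
  simp

lemma TLE_eq_zero {t : ℂ} (ht : t ≠ 0) (n : ℕ) (i : Fin n) (w : Vn (n + 1)) :
    TLE t (n + 1) i (by omega) w = 0 ↔ ∀ u, w (upd u i 1 0) = t ^ 2 * w (upd u i 0 1) := by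
  constructor
  · intro h u
    have := congrFun h (upd u i 0 1)
    rw [TLE_apply] at this
    have e : ∀ a b, upd (upd u i 0 1) i a b = upd u i a b := by
      intro a b
      funext k
      simp only [upd, Function.update_apply]
      split_ifs <;> rfl
    have h1 : upd u i 0 1 i.castSucc = 0 := by simp [upd, Function.update_apply, Fin.ext_iff]
    have h2 : upd u i 0 1 i.succ = 1 := by simp [upd]
    rw [e, e, h1, h2] at this
    simp [etaC, ht] at this
    have h3 : I * (t * w (upd u i 0 1) - t⁻¹ * w (upd u i 1 0)) = 0 := by linear_combination this
    have h4 := (mul_eq_zero.mp h3).resolve_left I_ne_zero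
    field_simp at h4
    linear_combination -h4
  · intro h
    funext u
    rw [TLE_apply, h]
    simp
    right
    field_simp
    ring

lemma inv_perm {n : ℕ} (h : (Fin (n + 1) → Fin 2) → ℂ)
    (hh : ∀ u (i : Fin n), h (upd u i 1 0) = h (upd u i 0 1)) (σ : Equiv.Perm (Fin (n + 1))) :
    ∀ u, h (u ∘ σ) = h u := by
  have hσ : σ ∈ Submonoid.closure
      (Set.range fun i : Fin n => Equiv.swap i.castSucc i.succ) := by
    rw [Equiv.Perm.mclosure_swap_castSucc_succ]; trivial
  induction hσ using Submonoid.closure_induction with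
  | mem x hx =>
    obtain ⟨i, rfl⟩ := hx
    intro u
    have key : u ∘ Equiv.swap i.castSucc i.succ = upd u i (u i.succ) (u i.castSucc) := by
      funext k
      simp only [Function.comp, upd, Function.update_apply, Equiv.swap_apply_def]
      split_ifs with h1 h2 h3
      · rw [h1] at h2; simp [Fin.ext_iff] at h2
      · rfl
      · rfl
      · rfl
    have key2 : u = upd u i (u i.castSucc) (u i.succ) := by
      simp [upd]
    show h (u ∘ Equiv.swap i.castSucc i.succ) = _
    rw [key]
    conv_rhs => rw [key2]
    generalize u i.castSucc = a
    generalize u i.succ = b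
    fin_cases a <;> fin_cases b
    · rfl
    · exact hh u i
    · exact (hh u i).symm
    · rfl
  | one => intro u; rfl
  | mul x y _ _ hx hy =>
    intro u
    rw [Equiv.Perm.coe_mul, ← Function.comp_assoc, hy, hx]

lemma oN_card {n : ℕ} (u : Fin n → Fin 2) : Fintype.card {k // u k = 1} = oN u := by
  rw [Fintype.card_subtype, Finset.card_filter]
  refine Finset.sum_congr rfl fun k _ => ?_
  generalize u k = a
  fin_cases a <;> rfl

lemma exists_perm {n : ℕ} (u v : Fin n → Fin 2) (h : oN u = oN v) :
    ∃ σ : Equiv.Perm (Fin n), v ∘ σ = u := by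
  have h1 : Fintype.card {k // u k = 1} = Fintype.card {k // v k = 1} := by
    rw [oN_card, oN_card, h]
  have h0 : Fintype.card {k // u k = 0} = Fintype.card {k // v k = 0} := by
    have e : ∀ w : Fin n → Fin 2, Fintype.card {k // w k = 0} =
        Fintype.card (Fin n) - Fintype.card {k // w k = 1} := by
      intro w
      rw [← Fintype.card_subtype_compl]
      refine Fintype.card_congr (Equiv.subtypeEquivRight fun k => ?_)
      generalize w k = a
      fin_cases a <;> simp
    rw [e, e, h1]
  have : ∀ c, Nonempty ({k // u k = c} ≃ {k // v k = c}) := by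
    intro c
    refine Fintype.card_eq.mp ?_
    fin_cases c
    · exact h0
    · exact h1
  refine ⟨Equiv.ofFiberEquiv fun c => (this c).some, ?_⟩
  funext k
  exact Equiv.ofFiberEquiv_map _ k

lemma exists_oN (n j : ℕ) (h : j ≤ n) : ∃ u : Fin n → Fin 2, oN u = j := by
  induction n generalizing j with
  | zero => exact ⟨fun _ => 0, by simp [oN]; omega⟩
  | succ n ih =>
    rcases j with _ | j
    · exact ⟨fun _ => 0, by simp [oN]⟩
    · obtain ⟨u, hu⟩ := ih j (by omega)
      exact ⟨Fin.cons 1 u, by rw [oN_cons, hu]; simp; ring⟩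

/-- scaling coefficients -/
def cc (t : ℂ) (n : ℕ) : ℕ → ℂ
  | 0 => 1
  | j + 1 => cc t n j * (t ^ (1 - (n : ℤ)) * Gg t ((j : ℤ) + 1) / qint t ((n : ℤ) - j))

lemma Gg_ne {t : ℂ} (ht : t ≠ 0) (hroot : ∀ k : ℕ, 0 < k → t ^ k ≠ 1) (m : ℤ) (hm : 0 < m) :
    Gg t m ≠ 0 := by
  lift m to ℕ using hm.le
  unfold Gg
  refine div_ne_zero ?_ (sub_ne_zero.mpr (hroot 4 (by norm_num)))
  refine sub_ne_zero.mpr ?_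
  have := hroot (4 * m) (by omega)
  exact_mod_cast this

lemma qint_ne {t : ℂ} (ht : t ≠ 0) (hroot : ∀ k : ℕ, 0 < k → t ^ k ≠ 1) (m : ℤ) (hm : 0 < m) :
    qint t m ≠ 0 := by
  rw [qint_eq ht (sub_ne_zero.mpr (hroot 4 (by norm_num)))]
  exact mul_ne_zero (zpow_ne_zero _ ht) (Gg_ne ht hroot m hm)

lemma cc_ne {t : ℂ} (ht : t ≠ 0) (hroot : ∀ k : ℕ, 0 < k → t ^ k ≠ 1) (n j : ℕ) (hj : j ≤ n) :
    cc t n j ≠ 0 := by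
  induction j with
  | zero => exact one_ne_zero
  | succ j ih =>
    rw [cc]
    exact mul_ne_zero (ih (by omega)) (div_ne_zero (mul_ne_zero (zpow_ne_zero _ ht)
      (Gg_ne ht hroot _ (by omega))) (qint_ne ht hroot _ (by omega)))

/-- extension by zero -/
def ex {n : ℕ} (x : Fin (n + 1) → ℂ) (j : ℕ) : ℂ := if h : j < n + 1 then x ⟨j, h⟩ else 0

/-- The intertwiner. -/
def phi (t : ℂ) (n : ℕ) : (Fin (n + 1) → ℂ) →ₗ[ℂ] Vn n where
  toFun x := fun u => cc t n (oN u) * Tw t n u * ex x (oN u)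
  map_add' x y := by
    funext u
    simp only [ex, Pi.add_apply]
    split_ifs <;> ring
  map_smul' r x := by
    funext u
    simp only [ex, Pi.smul_apply, smul_eq_mul, RingHom.id_apply]
    split_ifs <;> ring

lemma phi_apply (t : ℂ) (n : ℕ) (x : Fin (n + 1) → ℂ) (u : Fin n → Fin 2) :
    phi t n x u = cc t n (oN u) * Tw t n u * ex x (oN u) := rfl

lemma phi_K {t : ℂ} (ht : t ≠ 0) (n : ℕ) (x : Fin (n + 1) → ℂ) :
    piK t n (phi t n x) = phi t n ((Kmat t n).mulVec x) := by
  funext u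
  have := oN_le u
  rw [phi_apply]
  simp [piK, ptwiseMul, phi_apply, prod_kD ht, Kmat, ex, Matrix.mulVec_diagonal]
  split_ifs <;> ring

lemma phi_K' {t : ℂ} (ht : t ≠ 0) (n : ℕ) (x : Fin (n + 1) → ℂ) :
    piK' t n (phi t n x) = phi t n ((K'mat t n).mulVec x) := by
  funext u
  have := oN_le u
  rw [phi_apply]
  simp only [piK', ptwiseMul, LinearMap.coe_mk, AddHom.coe_mk, phi_apply, prod_kD' ht, K'mat, ex,
    Matrix.mulVec_diagonal]
  split_ifs <;> ring

lemma ex_X (t : ℂ) (n : ℕ) (x : Fin (n + 1) → ℂ) (j : ℕ) (hj : j ≤ n) :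
    ex ((Xmat t n).mulVec x) j = qint t ((j : ℤ) + 1) * ex x (j + 1) := by
  rw [ex, dif_pos (by omega)]
  simp only [Matrix.mulVec, dotProduct, Xmat, Matrix.of_apply, ite_mul, zero_mul]
  by_cases h : j + 1 < n + 1
  · rw [Finset.sum_eq_single ⟨j + 1, h⟩]
    · simp [ex, h]
    · intro b _ hb
      rw [if_neg]
      intro hb'
      exact hb (Fin.ext hb')
    · simp
  · rw [ex, dif_neg h, mul_zero]
    refine Finset.sum_eq_zero fun b _ => ?_
    rw [if_neg]
    intro hb
    have := b.2
    change (b : ℕ) = j + 1 at hb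
    omega

lemma ex_Y_zero (t : ℂ) (n : ℕ) (x : Fin (n + 1) → ℂ) :
    ex ((Ymat t n).mulVec x) 0 = 0 := by
  rw [ex, dif_pos (by omega)]
  simp [Matrix.mulVec, dotProduct, Ymat]

lemma ex_Y_succ (t : ℂ) (n : ℕ) (x : Fin (n + 1) → ℂ) (j : ℕ) (hj : j + 1 ≤ n) :
    ex ((Ymat t n).mulVec x) (j + 1) = qint t ((n : ℤ) - j) * ex x j := by
  rw [ex, dif_pos (by omega)]
  simp only [Matrix.mulVec, dotProduct, Ymat, Matrix.of_apply, ite_mul, zero_mul]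
  rw [Finset.sum_eq_single ⟨j, by omega⟩]
  · simp [ex, show j < n + 1 by omega]
  · intro b _ hb
    rw [if_neg]
    intro hb'
    simp at hb'
    exact hb (Fin.ext hb'.symm)
  · simp

lemma phi_X {t : ℂ} (ht : t ≠ 0) (hroot : ∀ k : ℕ, 0 < k → t ^ k ≠ 1) (n : ℕ)
    (x : Fin (n + 1) → ℂ) :
    piX t n (phi t n x) = phi t n ((Xmat t n).mulVec x) := by
  have h4 : t ^ 4 - 1 ≠ 0 := sub_ne_zero.mpr (hroot 4 (by norm_num))
  funext u
  have hu := oN_le u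
  rw [piX_apply, phi_apply, ex_X _ _ _ _ hu]
  have e : ∀ i, (if u i = 0 then cf t u i * phi t n x (Function.update u i 1) else 0) =
      (if u i = 0 then cf t u i * Tw t n (Function.update u i 1) else 0) *
        (cc t n (oN u + 1) * ex x (oN u + 1)) := by
    intro i
    split_ifs with h
    · have := oN_update u i 1
      rw [h] at this
      simp at this
      rw [phi_apply, this]
      ring
    · simp
  rw [Finset.sum_congr rfl (fun i _ => e i), ← Finset.sum_mul, SX ht h4]
  by_cases h : oN u < n
  · have hq := qint_ne ht hroot ((n : ℤ) - oN u) (by omega)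
    rw [cc]
    have : t ^ (1 - (n : ℤ)) * t ^ (1 - (n : ℤ)) * (Gg t (n - oN u) * Gg t ((oN u : ℤ) + 1)) =
        qint t ((oN u : ℤ) + 1) * qint t ((n : ℤ) - oN u) := by
      rw [qint_eq ht h4, qint_eq ht h4, ← zpow_add₀ ht]
      rw [show (1 - (n : ℤ) + (1 - (n : ℤ))) =
        (2 - 2 * ((oN u : ℤ) + 1)) + (2 - 2 * ((n : ℤ) - oN u)) by ring, zpow_add₀ ht]
      ring
    field_simp
    linear_combination (Tw t n u * cc t n (oN u) * ex x (oN u + 1)) * this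
  · rw [show ex x (oN u + 1) = 0 by rw [ex, dif_neg (by omega)]]
    simp

lemma phi_Y {t : ℂ} (ht : t ≠ 0) (hroot : ∀ k : ℕ, 0 < k → t ^ k ≠ 1) (n : ℕ)
    (x : Fin (n + 1) → ℂ) :
    piY t n (phi t n x) = phi t n ((Ymat t n).mulVec x) := by
  have h4 : t ^ 4 - 1 ≠ 0 := sub_ne_zero.mpr (hroot 4 (by norm_num))
  funext u
  have hu := oN_le u
  rw [piY_apply, phi_apply]
  have e : ∀ i, (if u i = 1 then cf t u i * phi t n x (Function.update u i 0) else 0) =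
      (if u i = 1 then cf t u i * Tw t n (Function.update u i 0) else 0) *
        (cc t n (oN u - 1) * ex x (oN u - 1)) := by
    intro i
    split_ifs with h
    · have := oN_update u i 0
      rw [h] at this
      simp at this
      rw [phi_apply, ← this]
      simp
      ring
    · simp
  rw [Finset.sum_congr rfl (fun i _ => e i), ← Finset.sum_mul, SY ht h4]
  rcases hj : oN u with _ | j
  · rw [ex_Y_zero]
    simp [Gg]
  · have hq := qint_ne ht hroot ((n : ℤ) - j) (by omega)
    rw [ex_Y_succ _ _ _ _ (by omega), cc]
    push_cast
    field_simp

lemma phi_inj {t : ℂ} (ht : t ≠ 0) (hroot : ∀ k : ℕ, 0 < k → t ^ k ≠ 1) (n : ℕ) :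
    Function.Injective (phi t n) := by
  intro x y h
  funext j
  obtain ⟨u, hu⟩ := exists_oN n j (by omega)
  have := congrFun h u
  rw [phi_apply, phi_apply, hu] at this
  have h2 := mul_left_cancel₀
    (mul_ne_zero (cc_ne ht hroot n j (by omega)) (Tw_ne ht n u)) this
  simpa only [ex, dif_pos j.2] using h2

lemma mem_range_phi {t : ℂ} (ht : t ≠ 0) (hroot : ∀ k : ℕ, 0 < k → t ^ k ≠ 1) (n : ℕ)
    (w : Vn (n + 1)) : w ∈ LinearMap.range (phi t (n + 1)) ↔
      ∀ (i : ℕ) (h : i + 1 < n + 1), TLE t (n + 1) i h w = 0 := by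
  constructor
  · rintro ⟨x, rfl⟩ i h
    refine (TLE_eq_zero ht n ⟨i, by omega⟩ _).mpr fun u => ?_
    rw [phi_apply, phi_apply, oN_upd, Tw_upd ht]
    ring
  · intro h
    have hw : ∀ u (i : Fin n), w (upd u i 1 0) = t ^ 2 * w (upd u i 0 1) :=
      fun u i => (TLE_eq_zero ht n i w).mp (h i (by omega)) u
    have hinv : ∀ u v, oN u = oN v → w u / Tw t _ u = w v / Tw t _ v := by
      intro u v huv
      obtain ⟨σ, rfl⟩ := exists_perm u v huv
      refine inv_perm (fun u => w u / Tw t _ u) (fun u i => ?_) σ v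
      rw [hw, Tw_upd ht]
      exact mul_div_mul_left _ _ (pow_ne_zero 2 ht)
    have hs : ∀ j : Fin (n + 1 + 1), ∃ u : Fin (n + 1) → Fin 2, oN u = j :=
      fun j => exists_oN _ _ (by omega)
    choose s hs using hs
    refine ⟨fun j => w (s j) / Tw t _ (s j) / cc t (n + 1) j, ?_⟩
    funext u
    have hu := oN_le u
    rw [phi_apply, ex, dif_pos (by omega)]
    rw [hinv _ u (hs _)]
    have := cc_ne ht hroot _ _ hu
    have := Tw_ne ht _ u
    field_simp

/-- The image of the Jones–Wenzl idempotent `f_n` is an `Aₜ`-submodule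
of `1̲^{⊗n}` of dimension `n+1`, isomorphic as an `Aₜ`-module to the irreducible
module `n̲`. -/
theorem stmt12 (t : ℂ) (ht : t ≠ 0) (hroot : ∀ k : ℕ, 0 < k → t ^ k ≠ 1) (n : ℕ)
    (hn : 1 ≤ n) (π : At t →ₐ[ℂ] Module.End ℂ (Vn n)) (hπ : IsPi t n π)
    (ρ : At t →ₐ[ℂ] Matrix (Fin (n + 1)) (Fin (n + 1)) ℂ) (hρ : IsRho t n ρ)
    (f : Module.End ℂ (Vn n))
    (hf : f ∈ Algebra.adjoin ℂ
        {g : Module.End ℂ (Vn n) | ∃ (i : ℕ) (h : i + 1 < n), g = TLE t n i h})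
    (hidem : f * f = f) (hne : f ≠ 0)
    (hkill : ∀ (i : ℕ) (h : i + 1 < n), TLE t n i h * f = 0 ∧ f * TLE t n i h = 0) :
    -- the image of `f` is an `Aₜ`-submodule …
    (∀ (Z : At t) (w : Vn n), w ∈ LinearMap.range f → π Z w ∈ LinearMap.range f) ∧
    -- … of dimension `n + 1` …
    Module.finrank ℂ (LinearMap.range f) = n + 1 ∧
    -- … isomorphic as an `Aₜ`-module to `n̲`
    ∃ φ : (Fin (n + 1) → ℂ) →ₗ[ℂ] Vn n,
      Function.Injective φ ∧ LinearMap.range φ = LinearMap.range f ∧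
      ∀ (Z : At t) (x : Fin (n + 1) → ℂ), π Z (φ x) = φ ((ρ Z).mulVec x) := by
  obtain ⟨m, rfl⟩ : ∃ m, n = m + 1 := ⟨n - 1, by omega⟩
  have hP : ∃ c : ℂ, f * f = c • f ∧
      ∀ w, (∀ (i : ℕ) (h : i + 1 < m + 1), TLE t (m + 1) i h w = 0) → f w = c • w := by
    have hgen : ∀ g ∈ Algebra.adjoin ℂ {g : Module.End ℂ (Vn (m + 1)) |
        ∃ (i : ℕ) (h : i + 1 < m + 1), g = TLE t (m + 1) i h}, ∃ c : ℂ, f * g = c • f ∧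
        ∀ w, (∀ (i : ℕ) (h : i + 1 < m + 1), TLE t (m + 1) i h w = 0) → g w = c • w := by
      intro g hg
      induction hg using Algebra.adjoin_induction with
      | mem g hg =>
        obtain ⟨i, h, rfl⟩ := hg
        exact ⟨0, by simp [(hkill i h).2], fun w hw => by simp [hw i h]⟩
      | algebraMap r =>
        refine ⟨r, ?_, fun w _ => by simp [Module.algebraMap_end_apply]⟩
        rw [Algebra.algebraMap_eq_smul_one, mul_smul_comm, mul_one]
      | add x y _ _ hx hy =>
        obtain ⟨a, ha, ha'⟩ := hx
        obtain ⟨b, hb, hb'⟩ := hy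
        refine ⟨a + b, by rw [mul_add, ha, hb, add_smul], fun w hw => ?_⟩
        rw [LinearMap.add_apply, ha' w hw, hb' w hw, add_smul]
      | mul x y _ _ hx hy =>
        obtain ⟨a, ha, ha'⟩ := hx
        obtain ⟨b, hb, hb'⟩ := hy
        refine ⟨a * b, by rw [← mul_assoc, ha, smul_mul_assoc, hb, smul_smul], fun w hw => ?_⟩
        rw [Module.End.mul_apply, hb' w hw, map_smul, ha' w hw, smul_smul, mul_comm]
    exact hgen f hf
  have hrange : LinearMap.range (phi t (m + 1)) = LinearMap.range f := by
    obtain ⟨c, hc, hc'⟩ := hP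
    have hc1 : c = 1 := by
      rw [hidem] at hc
      by_contra h1
      refine hne (LinearMap.ext fun v => funext fun u => ?_)
      have h2 : f v u = c * f v u := congrFun (LinearMap.congr_fun hc v) u
      have h3 : (c - 1) * f v u = 0 := by linear_combination -h2
      exact (mul_eq_zero.mp h3).resolve_left (sub_ne_zero.mpr h1)
    subst hc1
    ext w
    rw [mem_range_phi ht hroot]
    constructor
    · intro hw
      exact ⟨w, by rw [hc' w hw, one_smul]⟩
    · rintro ⟨v, rfl⟩ i h
      exact LinearMap.congr_fun (hkill i h).1 v
  have hint : ∀ (Z : At t) (x : Fin (m + 1 + 1) → ℂ),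
      π Z (phi t (m + 1) x) = phi t (m + 1) ((ρ Z).mulVec x) := by
    intro Z
    obtain ⟨a, rfl⟩ := RingQuot.mkAlgHom_surjective ℂ (QRel t) Z
    obtain ⟨hπX, hπY, hπK, hπK'⟩ := hπ
    obtain ⟨hρX, hρY, hρK, hρK'⟩ := hρ
    induction a using FreeAlgebra.induction with
    | grade0 r =>
      intro x
      rw [AlgHom.commutes, AlgHom.commutes, AlgHom.commutes, Module.algebraMap_end_apply,
        Algebra.algebraMap_eq_smul_one, Matrix.smul_mulVec, Matrix.one_mulVec, map_smul]
    | grade1 g =>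
      intro x
      cases g with
      | X =>
        change π (aX t) _ = phi t (m + 1) ((ρ (aX t)).mulVec x)
        rw [hπX, hρX, phi_X ht hroot]
      | Y =>
        change π (aY t) _ = phi t (m + 1) ((ρ (aY t)).mulVec x)
        rw [hπY, hρY, phi_Y ht hroot]
      | K =>
        change π (aK t) _ = phi t (m + 1) ((ρ (aK t)).mulVec x)
        rw [hπK, hρK, phi_K ht]
      | K' =>
        change π (aK' t) _ = phi t (m + 1) ((ρ (aK' t)).mulVec x)
        rw [hπK', hρK', phi_K' ht]
    | mul a b ha hb =>
      intro x
      rw [map_mul, map_mul, map_mul, Module.End.mul_apply, hb, ha, Matrix.mulVec_mulVec]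
    | add a b ha hb =>
      intro x
      rw [map_add, map_add, map_add, LinearMap.add_apply, hb, ha, Matrix.add_mulVec, map_add]
  refine ⟨?_, ?_, phi t (m + 1), phi_inj ht hroot _, hrange, hint⟩
  · intro Z w hw
    rw [← hrange] at hw ⊢
    obtain ⟨x, rfl⟩ := hw
    exact ⟨_, (hint Z x).symm⟩
  · rw [← hrange, LinearMap.finrank_range_of_inj (phi_inj ht hroot _)]
    simp

end
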